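/- arXiv:1502.00981 — 2 statements merged into one kernel-verified Lean document; each statement's English description precedes it below -/
import Mathlib

section
/- Virasoro commutation relations for the multi-trace matrix model operators (Lemma in Section 7.3 of the paper). For all integers m, n ≥ 1, the operators L_m defined in the context satisfy L_m∘L_n − L_n∘L_m = (m−n)·L_{m+n} as linear endomorphisms of the polynomial ring A; in particular (L_m)_{m≥1} form a representation of the Virasoro commutation relations. -/
/-!
Virasoro commutation relations for the multi-trace matrix model operators
`L_m` acting on the polynomial ring `A = ℂ[t_λ]`, where `λ` runs over the
nonempty finite multisets of nonnegative integers.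
-/

open MvPolynomial

namespace VirasoroMultiTrace

/-- Index set: nonempty finite multisets of nonnegative integers. -/
abbrev Idx : Type := {μ : Multiset ℕ // μ ≠ 0}

/-- The polynomial ring `A` in the variables `t_λ`, `λ` a nonempty finite
multiset of nonnegative integers. -/
abbrev A : Type := MvPolynomial Idx ℂ

/-- The singleton variable `t_p`. -/
noncomputable def t (p : ℕ) : A := X (⟨{p}, by simp⟩ : Idx)

/-- The multilinear variable `t_{p_1, …, p_k}` (symmetric in its indices,
being labelled by the multiset `{p_1, …, p_k}`), for `k ≥ 1`. -/
noncomputable def tMulti {k : ℕ} (p : Fin (k + 1) → ℕ) : A :=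
  X (⟨(List.ofFn p : Multiset ℕ), by simp⟩ : Idx)

/-- `∂/∂t_l` (derivative with respect to a singleton variable), with the
convention `∂/∂t_l = 0` for `l < 0`. -/
noncomputable def dS (l : ℤ) (f : A) : A :=
  if 0 ≤ l then pderiv (⟨{l.toNat}, by simp⟩ : Idx) f else 0

/-- `L_m^{(0)} = ℏ² ∑_{p=0}^{m} p (m-p) ∂²/(∂t_p ∂t_{m-p})
  + ∑_{p ≥ 0} (p+m) t_p ∂/∂t_{p+m}` (the finite first sum is written over
`p ∈ {0, …, max(m,0)}`, all extra terms having coefficient `p(m-p) = 0`; the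
second, locally finite, sum is a `finsum`). -/
noncomputable def L0 (ℏ : ℂ) (m : ℤ) (f : A) : A :=
  C (ℏ ^ 2) * ∑ p ∈ Finset.range (m.toNat + 1),
      C ((p : ℂ) * ((m : ℂ) - (p : ℂ))) * dS p (dS (m - p) f)
  + ∑ᶠ p : ℕ, C ((p : ℂ) + (m : ℂ)) * t p * dS ((p : ℤ) + m) f

/-- The multi-trace matrix model Virasoro operator
`L_m = L_m^{(0)} + ∑_{k ≥ 2} ∑_{(p_1,…,p_k) ∈ ℕ^k} ((p_1+m)/(k-2)!)
  t_{p_1,…,p_k} ∂^k/(∂t_{p_1+m} ∂t_{p_2} ⋯ ∂t_{p_k})`,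
the locally finite sums being `finsum`s (below `k = K + 2`, so
`(k-2)! = K!`). -/
noncomputable def L (ℏ : ℂ) (m : ℤ) (f : A) : A :=
  L0 ℏ m f
  + ∑ᶠ K : ℕ, ∑ᶠ p : Fin (K + 2) → ℕ,
      C (((p 0 : ℂ) + (m : ℂ)) / (Nat.factorial K : ℂ)) *
        X (⟨(List.ofFn p : Multiset ℕ), by simp⟩ : Idx) *
        dS ((p 0 : ℤ) + m)
          ((List.ofFn (fun j : Fin (K + 1) => p j.succ)).foldr
            (fun q g => dS (q : ℤ) g) f)

section abs
variable {W : Type*} [AddCommGroup W] [Module ℂ W]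

noncomputable def Vop (D τ : ℕ → Module.End ℂ W) (N m : ℕ) : Module.End ℂ W :=
  ∑ p ∈ Finset.range N, ((p : ℂ) + m) • (τ p * D (p + m))

noncomputable def Uop (D : ℕ → Module.End ℂ W) (m : ℕ) : Module.End ℂ W :=
  ∑ p ∈ Finset.range (m + 1), ((p : ℂ) * (m - p)) • (D p * D (m - p))

theorem VV (D τ : ℕ → Module.End ℂ W) (N m n : ℕ)
    (hDτ : ∀ a b, b < N → D a * τ b = τ b * D a + if a = b then 1 else 0) :
    Vop D τ N m * Vop D τ N n =
      ∑ p ∈ Finset.range N, ∑ q ∈ Finset.range N,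
        (((p : ℂ) + m) * ((q : ℂ) + n)) • (τ p * τ q * (D (p + m) * D (q + n)))
      + ∑ p ∈ Finset.range N, if p + m < N then
          (((p : ℂ) + m) * ((p : ℂ) + m + n)) • (τ p * D (p + m + n)) else 0 := by
  unfold Vop
  rw [Finset.sum_mul_sum, ← Finset.sum_add_distrib]
  refine Finset.sum_congr rfl fun p hp => ?_
  have key : ∀ q ∈ Finset.range N, (((p : ℂ) + m) • (τ p * D (p + m))) * (((q : ℂ) + n) • (τ q * D (q + n)))
      = (((p : ℂ) + m) * ((q : ℂ) + n)) • (τ p * τ q * (D (p + m) * D (q + n))) +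
        if p + m = q then (((p : ℂ) + m) * ((q : ℂ) + n)) • (τ p * D (q + n)) else 0 := by
    intro q hq
    rw [smul_mul_smul_comm]
    have : τ p * D (p + m) * (τ q * D (q + n)) = τ p * (D (p + m) * τ q) * D (q + n) := by
      simp only [mul_assoc]
    rw [this, hDτ _ _ (Finset.mem_range.1 hq)]
    split_ifs <;> simp [mul_add, add_mul, mul_assoc, smul_add]
  rw [Finset.sum_congr rfl key, Finset.sum_add_distrib, Finset.sum_ite_eq]
  simp

theorem VV_comm (D τ : ℕ → Module.End ℂ W) (N m n : ℕ) (f : W)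
    (hD : ∀ a b, D a * D b = D b * D a)
    (hτ : ∀ a b, a < N → b < N → τ a * τ b = τ b * τ a)
    (hDτ : ∀ a b, b < N → D a * τ b = τ b * D a + if a = b then 1 else 0)
    (hf : ∀ p, N ≤ p → D p f = 0) :
    (Vop D τ N m * Vop D τ N n) f - (Vop D τ N n * Vop D τ N m) f
      = ((m : ℂ) - n) • Vop D τ N (m + n) f := by
  have aux : ∀ m n : ℕ, (∑ p ∈ Finset.range N, if p + m < N then
          (((p : ℂ) + m) * ((p : ℂ) + m + n)) • (τ p * D (p + m + n)) else 0) f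
      = ∑ p ∈ Finset.range N, (((p : ℂ) + m) * ((p : ℂ) + m + n)) • (τ p (D (p + (m + n)) f)) := by
    intro m n
    rw [LinearMap.sum_apply]
    refine Finset.sum_congr rfl fun p hp => ?_
    split_ifs with h
    · simp [add_assoc]
    · rw [hf (p + (m + n)) (by omega)]; simp
  have e : ∑ p ∈ Finset.range N, ∑ q ∈ Finset.range N,
        (((p : ℂ) + m) * ((q : ℂ) + n)) • (τ p * τ q * (D (p + m) * D (q + n)))
      = ∑ p ∈ Finset.range N, ∑ q ∈ Finset.range N,
        (((p : ℂ) + n) * ((q : ℂ) + m)) • (τ p * τ q * (D (p + n) * D (q + m))) := by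
    rw [Finset.sum_comm]
    refine Finset.sum_congr rfl fun p hp => Finset.sum_congr rfl fun q hq => ?_
    rw [hτ p q (Finset.mem_range.1 hp) (Finset.mem_range.1 hq), hD (p + n), mul_comm]
  rw [VV D τ N m n hDτ, VV D τ N n m hDτ, e, LinearMap.add_apply, LinearMap.add_apply,
    add_sub_add_left_eq_sub, aux, aux, ← Finset.sum_sub_distrib, Vop, LinearMap.sum_apply,
    Finset.smul_sum]
  refine Finset.sum_congr rfl fun p hp => ?_
  rw [add_comm n m, ← sub_smul, LinearMap.smul_apply, smul_smul, Module.End.mul_apply]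
  congr 1
  push_cast
  ring

theorem UV (D τ : ℕ → Module.End ℂ W) (N m n : ℕ) (hm : m < N)
    (hD : ∀ a b, D a * D b = D b * D a)
    (hDτ : ∀ a b, b < N → D a * τ b = τ b * D a + if a = b then 1 else 0) :
    Uop D m * Vop D τ N n - Vop D τ N n * Uop D m =
      (2 : ℂ) • ∑ p ∈ Finset.range (m + 1),
        (((p : ℂ) * (m - p)) * (m + n - p)) • (D p * D (m + n - p)) := by
  have c1 : ∀ a, a < N → D a * Vop D τ N n = Vop D τ N n * D a + ((a : ℂ) + n) • D (a + n) := by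
    intro a ha
    unfold Vop
    rw [Finset.mul_sum, Finset.sum_mul]
    have key : ∀ q ∈ Finset.range N, D a * (((q : ℂ) + n) • (τ q * D (q + n)))
      = (((q : ℂ) + n) • (τ q * D (q + n))) * D a +
        if a = q then ((q : ℂ) + n) • D (q + n) else 0 := by
      intro q hq
      rw [mul_smul_comm, ← mul_assoc, hDτ _ _ (Finset.mem_range.1 hq), smul_mul_assoc, mul_assoc (τ q),
        hD (q + n) a]
      split_ifs <;> simp [add_mul, mul_assoc, smul_add]
    rw [Finset.sum_congr rfl key, Finset.sum_add_distrib, Finset.sum_ite_eq]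
    simp [ha]
  have c2 : ∀ p ∈ Finset.range (m+1), (((p : ℂ) * (m - p)) • (D p * D (m - p))) * Vop D τ N n
      = Vop D τ N n * (((p : ℂ) * (m - p)) • (D p * D (m - p)))
        + ((((p : ℂ) * (m - p)) * (m + n - p)) • (D p * D (m + n - p))
        + (((p : ℂ) * (m - p)) * (p + n)) • (D (m - p) * D (p + n))) := by
    intro p hp
    have hp' : p ≤ m := by simpa [Nat.lt_succ_iff] using hp
    rw [smul_mul_assoc, mul_assoc, c1 _ (by omega), mul_add, ← mul_assoc, c1 p (by omega), add_mul,
      mul_smul_comm, smul_mul_assoc, smul_add, smul_add, mul_smul_comm, smul_smul, smul_smul,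
      mul_assoc, hD (p + n), show m - p + n = m + n - p by omega, Nat.cast_sub hp',
      show (m : ℂ) - p + n = m + n - p by ring]
    abel
  have c3 : ∑ p ∈ Finset.range (m + 1), (((p : ℂ) * (m - p)) * (p + n)) • (D (m - p) * D (p + n))
     = ∑ p ∈ Finset.range (m + 1),
        (((p : ℂ) * (m - p)) * (m + n - p)) • (D p * D (m + n - p)) := by
    rw [← Finset.sum_range_reflect]
    refine Finset.sum_congr rfl fun p hp => ?_
    have hp' : p ≤ m := by simpa [Nat.lt_succ_iff] using hp
    rw [show m + 1 - 1 - p = m - p by omega, show m - (m - p) = p by omega,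
      show m - p + n = m + n - p by omega, Nat.cast_sub hp']
    congr 1
    ring
  unfold Uop
  rw [Finset.sum_mul, Finset.sum_congr rfl c2, Finset.sum_add_distrib, Finset.sum_add_distrib, c3,
    ← Finset.mul_sum, add_sub_cancel_left, two_smul]

theorem comb (m n : ℕ) (g : ℕ → W) (hg : ∀ r, r ≤ m + n → g (m + n - r) = g r) :
    (2 : ℂ) • ∑ r ∈ Finset.range (m + 1), ((m : ℂ) - r) • g r
     - (2 : ℂ) • ∑ r ∈ Finset.range (n + 1), ((n : ℂ) - r) • g r
     = ((m : ℂ) - n) • ∑ r ∈ Finset.range (m + n + 1), g r := by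
  have r1 : ∑ r ∈ Finset.range (m + n + 1), ((m : ℂ) - r) • g r
     = ∑ r ∈ Finset.range (m + n + 1), ((r : ℂ) - n) • g r := by
    rw [← Finset.sum_range_reflect]
    refine Finset.sum_congr rfl fun p hp => ?_
    have hp' : p ≤ m + n := by simpa [Nat.lt_succ_iff] using hp
    rw [show m + n + 1 - 1 - p = m + n - p by omega, hg _ hp', Nat.cast_sub hp']
    congr 1
    push_cast
    ring
  have r2 : ∑ r ∈ Finset.range (n + 1), ((n : ℂ) - r) • g r
      = ∑ j ∈ Finset.range n, ((j : ℂ) + 1) • g (m + 1 + j) := by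
    rw [Finset.sum_range_succ, sub_self, zero_smul, add_zero, ← Finset.sum_range_reflect]
    refine Finset.sum_congr rfl fun p hp => ?_
    have hp' : p < n := by simpa using hp
    rw [← hg (n - 1 - p) (by omega), show m + n - (n - 1 - p) = m + 1 + p by omega,
      show n - 1 - p = n - (p + 1) by omega, Nat.cast_sub hp']
    congr 1
    push_cast
    ring
  have r3 : ∑ r ∈ Finset.range (m + n + 1), ((m : ℂ) - r) • g r
     = ∑ r ∈ Finset.range (m + 1), ((m : ℂ) - r) • g r
     - ∑ r ∈ Finset.range (n + 1), ((n : ℂ) - r) • g r := by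
    rw [r2, show m + n + 1 = m + 1 + n by omega, Finset.sum_range_add, sub_eq_add_neg,
      ← Finset.sum_neg_distrib]
    congr 1
    refine Finset.sum_congr rfl fun p hp => ?_
    rw [← neg_smul]
    congr 1
    push_cast
    ring
  rw [← smul_sub, ← r3, two_smul]
  nth_rw 2 [r1]
  rw [← Finset.sum_add_distrib, Finset.smul_sum]
  refine Finset.sum_congr rfl fun p hp => ?_
  rw [← add_smul]
  congr 1
  ring

theorem UU (D : ℕ → Module.End ℂ W) (m n : ℕ)
    (hD : ∀ a b, D a * D b = D b * D a) : Uop D m * Uop D n = Uop D n * Uop D m := by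
  unfold Uop
  have h4 : ∀ a b, Commute (D a) (D b) := hD
  refine Commute.sum_left _ _ _ fun p _ => Commute.sum_right _ _ _ fun q _ => ?_
  refine Commute.smul_left (Commute.smul_right ?_ _) _
  exact (((h4 _ _).mul_right (h4 _ _))).mul_left ((h4 _ _).mul_right (h4 _ _))

theorem main_abs (D τ : ℕ → Module.End ℂ W) (N m n : ℕ) (f : W) (h : ℂ) (hm : m < N) (hn : n < N)
    (hD : ∀ a b, D a * D b = D b * D a)
    (hτ : ∀ a b, a < N → b < N → τ a * τ b = τ b * τ a)
    (hDτ : ∀ a b, b < N → D a * τ b = τ b * D a + if a = b then 1 else 0)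
    (hf : ∀ p, N ≤ p → D p f = 0) :
    (h • Uop D m + Vop D τ N m) ((h • Uop D n + Vop D τ N n) f)
     - (h • Uop D n + Vop D τ N n) ((h • Uop D m + Vop D τ N m) f)
      = ((m : ℂ) - n) • (h • Uop D (m + n) + Vop D τ N (m + n)) f := by
  have e1 := UV D τ N m n hm hD hDτ
  have e2 := UV D τ N n m hn hD hDτ
  have e3 := VV_comm D τ N m n f hD hτ hDτ hf
  have e4 := UU D m n hD
  have e5 := comb m n (fun r => ((r : ℂ) * (m + n - r)) • (D r * D (m + n - r))) (by
    intro r hr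
    rw [show m + n - (m + n - r) = r by omega, hD, Nat.cast_sub hr]
    congr 1
    push_cast
    ring)
  have e6 : (Uop D m * Vop D τ N n - Vop D τ N n * Uop D m)
    - (Uop D n * Vop D τ N m - Vop D τ N m * Uop D n) = ((m : ℂ) - n) • Uop D (m + n) := by
    rw [e1, e2]
    refine Eq.trans ?_ (e5.trans ?_)
    · congr 2
      · refine Finset.sum_congr rfl fun p hp => ?_
        rw [smul_smul]; congr 1; ring
      · refine Finset.sum_congr rfl fun p hp => ?_
        rw [smul_smul, add_comm n m]; congr 1; ring
    · unfold Uop; push_cast; rfl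
  have e7 : (h • Uop D m + Vop D τ N m) * (h • Uop D n + Vop D τ N n)
     - (h • Uop D n + Vop D τ N n) * (h • Uop D m + Vop D τ N m)
     = h • (((m : ℂ) - n) • Uop D (m + n)) + (Vop D τ N m * Vop D τ N n - Vop D τ N n * Vop D τ N m) := by
    rw [← e6]
    simp only [add_mul, mul_add, smul_mul_assoc, mul_smul_comm, smul_sub, smul_add, e4]
    abel
  have e8 := congrArg (fun T => T f) e7
  simp only [LinearMap.sub_apply, Module.End.mul_apply, LinearMap.add_apply, LinearMap.smul_apply] at e8 e3 ⊢
  rw [e8, e3, smul_add, smul_comm]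
end abs

noncomputable def Ds (p : ℕ) : Module.End ℂ A := (pderiv (⟨{p}, by simp⟩ : Idx)).toLinearMap

noncomputable def mu (a : A) : Module.End ℂ A := LinearMap.mulLeft ℂ a

open Classical in
noncomputable def cM (M : Multiset ℕ) : A :=
  if h : 2 ≤ Multiset.card M then X (⟨M, by rintro rfl; simp at h⟩ : Idx) else 0

noncomputable def S (N : ℕ) : ℕ → Multiset ℕ → Module.End ℂ A
  | 0, M => mu (cM M)
  | K + 1, M => ∑ a ∈ Finset.range N, S N K (a ::ₘ M) * Ds a

noncomputable def tau (N : ℕ) (p : ℕ) : Module.End ℂ A :=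
  mu (t p) + ∑ K ∈ Finset.range N, ((Nat.factorial K : ℂ)⁻¹) • S N (K + 1) {p}

theorem Ds_apply (p : ℕ) (f : A) : Ds p f = pderiv (⟨{p}, by simp⟩ : Idx) f := rfl

theorem mu_apply (a f : A) : mu a f = a * f := rfl

theorem Ds_comm (a b : ℕ) : Ds a * Ds b = Ds b * Ds a := by
  refine LinearMap.ext fun f => ?_
  have h : ⁅pderiv (R := ℂ) (⟨{a}, by simp⟩ : Idx), pderiv (R := ℂ) (⟨{b}, by simp⟩ : Idx)⁆ = 0 := by
    classical
    apply MvPolynomial.derivation_ext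
    intro i
    rw [Derivation.commutator_apply, pderiv_X, pderiv_X]
    simp only [Pi.single_apply]
    split_ifs <;> simp
  have := congrArg (fun d => d f) h
  simp only [Derivation.commutator_apply, Derivation.zero_apply] at this
  exact sub_eq_zero.1 this

theorem Ds_mu (a : ℕ) (x : A) : Ds a * mu x = mu x * Ds a + mu (Ds a x) := by
  refine LinearMap.ext fun f => ?_
  simp only [Module.End.mul_apply, LinearMap.add_apply, mu_apply, Ds_apply]
  rw [pderiv_mul, add_comm]

theorem Ds_c (a : ℕ) (M : Multiset ℕ) : Ds a (cM M) = 0 := by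
  rw [Ds_apply, cM]
  split_ifs with h
  · apply pderiv_X_of_ne
    intro e
    have := congrArg (fun x : Idx => Multiset.card x.1) e
    simp at this
    omega
  · simp

theorem Ds_t (a b : ℕ) : Ds a (t b) = if a = b then 1 else 0 := by
  rw [Ds_apply, t]
  split_ifs with h
  · subst h; simp
  · apply pderiv_X_of_ne
    intro e
    have := congrArg Subtype.val e
    simp at this
    exact h this.symm

theorem mu_zero : mu 0 = 0 := by refine LinearMap.ext fun f => ?_; simp [mu_apply]

theorem mu_comm (x y : A) : Commute (mu x) (mu y) := by
  refine LinearMap.ext fun f => ?_; simp only [Module.End.mul_apply, mu_apply]; ring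

theorem comm_D_c (a : ℕ) (M : Multiset ℕ) : Commute (Ds a) (mu (cM M)) := by
  have := Ds_mu a (cM M)
  rwa [Ds_c, mu_zero, add_zero] at this

theorem S_D (N : ℕ) (a K : ℕ) : ∀ M, Commute (Ds a) (S N K M) := by
  induction K with
  | zero => intro M; exact comm_D_c a M
  | succ K ih =>
    intro M
    exact Commute.sum_right _ _ _ fun b _ => (ih _).mul_right (Ds_comm a b)

theorem S_c (N : ℕ) (K : ℕ) (M' : Multiset ℕ) : ∀ M, Commute (mu (cM M')) (S N K M) := by
  induction K with
  | zero => intro M; exact mu_comm _ _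
  | succ K ih =>
    intro M
    exact Commute.sum_right _ _ _ fun b _ => (ih _).mul_right (comm_D_c b M').symm

theorem S_S (N : ℕ) (K K' : ℕ) (M' : Multiset ℕ) : ∀ M, Commute (S N K M) (S N K' M') := by
  induction K with
  | zero => intro M; exact S_c N K' M M'
  | succ K ih =>
    intro M
    exact Commute.sum_left _ _ _ fun b _ => (ih _).mul_left (S_D N b K' M')

theorem Ds_mut (a b : ℕ) : Ds a * mu (t b) = mu (t b) * Ds a + if a = b then 1 else 0 := by
  rw [Ds_mu, Ds_t]
  congr 1
  split_ifs
  · refine LinearMap.ext fun f => ?_; simp [mu_apply]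
  · exact mu_zero

theorem S_t (N b : ℕ) (hb : b < N) (K : ℕ) : ∀ M, S N (K + 1) M * mu (t b)
    = mu (t b) * S N (K + 1) M + ((K : ℂ) + 1) • S N K (b ::ₘ M) := by
  have step : ∀ K (R : Multiset ℕ → Module.End ℂ A),
      (∀ M, S N K M * mu (t b) = mu (t b) * S N K M + R M) →
      ∀ M, S N (K + 1) M * mu (t b) = mu (t b) * S N (K + 1) M +
        (∑ a ∈ Finset.range N, R (a ::ₘ M) * Ds a + S N K (b ::ₘ M)) := by
    intro K R hR M
    have key : ∀ a ∈ Finset.range N, S N K (a ::ₘ M) * Ds a * mu (t b)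
        = mu (t b) * (S N K (a ::ₘ M) * Ds a) + R (a ::ₘ M) * Ds a
          + if a = b then S N K (a ::ₘ M) else 0 := by
      intro a _
      rw [mul_assoc, Ds_mut, mul_add, ← mul_assoc, hR, add_mul, mul_assoc]
      split_ifs <;> simp
    show (∑ a ∈ Finset.range N, S N K (a ::ₘ M) * Ds a) * mu (t b) = mu (t b) * (∑ a ∈ Finset.range N, S N K (a ::ₘ M) * Ds a) + _
    rw [Finset.sum_mul, Finset.sum_congr rfl key, Finset.sum_add_distrib, Finset.sum_add_distrib,
      Finset.sum_ite_eq', if_pos (Finset.mem_range.2 hb), Finset.mul_sum, add_assoc]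
  induction K with
  | zero =>
    intro M
    rw [step 0 (fun _ => 0) (fun M => by rw [add_zero]; exact mu_comm _ _)]
    simp
  | succ K ih =>
    intro M
    rw [step (K + 1) _ ih]
    congr 1
    have : ∑ a ∈ Finset.range N, ((K : ℂ) + 1) • S N K (b ::ₘ a ::ₘ M) * Ds a
       = ((K : ℂ) + 1) • S N (K + 1) (b ::ₘ M) := by
      show _ = _ • (∑ a ∈ Finset.range N, S N K (a ::ₘ b ::ₘ M) * Ds a)
      rw [Finset.smul_sum]
      refine Finset.sum_congr rfl fun a _ => ?_
      rw [smul_mul_assoc, Multiset.cons_swap]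
    rw [this]
    push_cast
    rw [add_smul ((K : ℂ) + 1) 1, one_smul]

theorem D_tau (N a b : ℕ) : Ds a * tau N b = tau N b * Ds a + if a = b then 1 else 0 := by
  have : Commute (Ds a) (∑ K ∈ Finset.range N, ((Nat.factorial K : ℂ)⁻¹) • S N (K + 1) {b}) :=
    Commute.sum_right _ _ _ fun K _ => (S_D N a _ _).smul_right _
  rw [tau, mul_add, Ds_mut, this.eq, add_mul]
  abel

theorem tau_tau (N a b : ℕ) (ha : a < N) (hb : b < N) : tau N a * tau N b = tau N b * tau N a := by
  have h1 : ∀ a b, b < N →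
      (∑ K ∈ Finset.range N, ((Nat.factorial K : ℂ)⁻¹) • S N (K + 1) {a}) * mu (t b)
      = mu (t b) * (∑ K ∈ Finset.range N, ((Nat.factorial K : ℂ)⁻¹) • S N (K + 1) {a})
      + ∑ K ∈ Finset.range N, ((Nat.factorial K : ℂ)⁻¹) • ((K : ℂ) + 1) • S N K {b, a} := by
    intro a b hb
    rw [Finset.sum_mul, Finset.mul_sum, ← Finset.sum_add_distrib]
    refine Finset.sum_congr rfl fun K _ => ?_
    rw [smul_mul_assoc, S_t N b hb, smul_add, mul_smul_comm]
    rfl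
  have h2 : Commute (∑ K ∈ Finset.range N, ((Nat.factorial K : ℂ)⁻¹) • S N (K + 1) {a})
      (∑ K ∈ Finset.range N, ((Nat.factorial K : ℂ)⁻¹) • S N (K + 1) {b}) :=
    Commute.sum_left _ _ _ fun K _ => Commute.sum_right _ _ _ fun K' _ =>
      ((S_S N _ _ _ _).smul_right _).smul_left _
  simp only [tau, add_mul, mul_add, h1 a b hb, h1 b a ha, h2.eq, (mu_comm (t a) (t b)).eq,
    Multiset.pair_comm b a]
  abel

/-! Linking the truncated operators with the given ones. -/

theorem dS_nat (p : ℕ) (f : A) : dS (p : ℤ) f = Ds p f := by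
  simp [dS, Ds_apply]

theorem foldr_eq (l : List ℕ) (f : A) :
    l.foldr (fun q g => dS (q : ℤ) g) f = (l.map Ds).prod f := by
  have e : (do let a ← l; pure (a : ℤ)) = l.map (fun a : ℕ => (a : ℤ)) :=
    (List.map_eq_flatMap ..).symm
  rw [e, List.foldr_map]
  clear e
  induction l with
  | nil => simp
  | cons a l ih => rw [List.foldr_cons, ih, dS_nat, List.map_cons, List.prod_cons]; rfl

theorem D_list (a : ℕ) (l : List ℕ) : Commute (Ds a) (l.map Ds).prod := by
  apply Commute.list_prod_right
  intro y hy
  obtain ⟨b, _, rfl⟩ := List.mem_map.1 hy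
  exact Ds_comm a b

theorem list_zero_of_mem (l : List ℕ) (a : ℕ) (ha : a ∈ l) (f : A) (h : Ds a f = 0) :
    (l.map Ds).prod f = 0 := by
  induction l with
  | nil => simp at ha
  | cons b l ih =>
    simp only [List.map_cons, List.prod_cons, Module.End.mul_apply]
    rcases List.mem_cons.1 ha with rfl | h'
    · have := congrArg (fun T => T f) (D_list a l).eq
      simp only [Module.End.mul_apply] at this
      rw [this, h, map_zero]
    · rw [ih h', map_zero]

theorem list_coeff (l : List ℕ) : ∀ (f : A) (d : ℕ), (∀ m : Idx →₀ ℕ, d + l.length ≤ m.degree → coeff m f = 0) →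
    ∀ m : Idx →₀ ℕ, d ≤ m.degree → coeff m ((l.map Ds).prod f) = 0 := by
  induction l with
  | nil => intro f d h m hm; simpa using h m (by simpa using hm)
  | cons a l ih =>
    intro f d h m hm
    simp only [List.map_cons, List.prod_cons, Module.End.mul_apply]
    rw [Ds_apply, coeff_pderiv, ih f (d + 1), zero_mul]
    · intro m hm
      apply h
      simp only [List.length_cons]; omega
    · rw [map_add]; simp; omega

def Good (N : ℕ) (f : A) : Prop :=
  (∀ p, N ≤ p → Ds p f = 0) ∧ ∀ l : List ℕ, N ≤ l.length → (l.map Ds).prod f = 0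

theorem Good.mono {N N' : ℕ} (h : N ≤ N') {f : A} (hf : Good N f) : Good N' f :=
  ⟨fun p hp => hf.1 p (h.trans hp), fun l hl => hf.2 l (h.trans hl)⟩

theorem exists_good (f : A) : ∃ N, Good N f := by
  obtain ⟨N1, h1⟩ : ∃ N, ∀ p, N ≤ p → Ds p f = 0 := by
    refine ⟨f.vars.sup (fun x => x.1.sum) + 1, fun p hp => pderiv_eq_zero_of_notMem_vars fun hm => ?_⟩
    have := Finset.le_sup (f := fun x : Idx => x.1.sum) hm
    simp at this
    omega
  have h2 : ∀ l : List ℕ, f.totalDegree + 1 ≤ l.length → (l.map Ds).prod f = 0 := by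
    intro l hl
    ext m
    rw [list_coeff l f 0 _ m (Nat.zero_le _), coeff_zero]
    intro m hm
    apply coeff_eq_zero_of_totalDegree_lt
    rw [Finsupp.degree_apply] at hm
    omega
  exact ⟨max N1 (f.totalDegree + 1), fun p hp => h1 p (by omega), fun l hl => h2 l (by omega)⟩

theorem sum_pi_succ {α : Type*} [AddCommMonoid α] (N K : ℕ) (h : (Fin (K + 1) → ℕ) → α) :
    ∑ q ∈ Fintype.piFinset (fun _ : Fin (K + 1) => Finset.range N), h q
     = ∑ a ∈ Finset.range N, ∑ q ∈ Fintype.piFinset (fun _ : Fin K => Finset.range N),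
        h (Fin.cons a q) := by
  rw [← Finset.sum_product']
  refine Finset.sum_bij' (fun q _ => (q 0, Fin.tail q)) (fun x _ => Fin.cons x.1 x.2) ?_ ?_ ?_ ?_ ?_
  · intro q hq
    simp only [Fintype.mem_piFinset, Finset.mem_product] at *
    exact ⟨hq 0, fun i => hq i.succ⟩
  · intro x hx
    simp only [Fintype.mem_piFinset, Finset.mem_product] at *
    intro i
    refine Fin.cases ?_ ?_ i
    · simpa using hx.1
    · intro j; simpa using hx.2 j
  · intro q _; simp
  · intro x _; simp
  · intro q _; simp

theorem S_apply (N K : ℕ) : ∀ (M : Multiset ℕ) (g : A), S N K M g =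
    ∑ q ∈ Fintype.piFinset (fun _ : Fin K => Finset.range N),
      cM ((List.ofFn q : Multiset ℕ) + M) * ((List.ofFn q).map Ds).prod g := by
  induction K with
  | zero => intro M g; simp [S, mu_apply]
  | succ K ih =>
    intro M g
    rw [sum_pi_succ]
    simp only [S, LinearMap.sum_apply, Module.End.mul_apply, ih]
    refine Finset.sum_congr rfl fun a _ => Finset.sum_congr rfl fun q _ => ?_
    rw [List.ofFn_cons, List.map_cons, List.prod_cons, (D_list a _).eq, Module.End.mul_apply,
      ← Multiset.cons_coe, Multiset.cons_add, Multiset.add_cons]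

theorem inner_eq (N K m : ℕ) (f : A) (hf : Good N f) :
    (∑ᶠ p : Fin (K + 2) → ℕ,
      C (((p 0 : ℂ) + ((m : ℤ) : ℂ)) / (Nat.factorial K : ℂ)) *
        X (⟨(List.ofFn p : Multiset ℕ), by simp⟩ : Idx) *
        dS ((p 0 : ℤ) + (m : ℤ))
          ((List.ofFn (fun j : Fin (K + 1) => p j.succ)).foldr
            (fun q g => dS (q : ℤ) g) f))
     = ∑ p ∈ Finset.range N, ((p : ℂ) + m) • (((Nat.factorial K : ℂ)⁻¹) • S N (K + 1) {p}) (Ds (p + m) f) := by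
  have term : ∀ p : Fin (K + 2) → ℕ, dS ((p 0 : ℤ) + (m : ℤ))
          ((List.ofFn (fun j : Fin (K + 1) => p j.succ)).foldr
            (fun q g => dS (q : ℤ) g) f) =
        ((List.ofFn (fun j : Fin (K + 1) => p j.succ)).map Ds).prod (Ds (p 0 + m) f) := by
    intro p
    rw [foldr_eq, ← Nat.cast_add, dS_nat]
    rw [← Module.End.mul_apply, ← Module.End.mul_apply, (D_list (p 0 + m) _).eq]
  simp only [term]
  rw [finsum_eq_sum_of_support_subset (s := Fintype.piFinset (fun _ : Fin (K + 2) => Finset.range N))]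
  · rw [sum_pi_succ]
    refine Finset.sum_congr rfl fun a _ => ?_
    rw [LinearMap.smul_apply, S_apply, Finset.smul_sum, Finset.smul_sum]
    refine Finset.sum_congr rfl fun q _ => ?_
    have hc : cM ((List.ofFn q : Multiset ℕ) + {a}) =
        X (⟨(List.ofFn (Fin.cons a q : Fin (K + 2) → ℕ) : Multiset ℕ), by simp⟩ : Idx) := by
      rw [cM, dif_pos (by simp)]
      congr 2
      rw [List.ofFn_cons, ← Multiset.cons_coe, add_comm, Multiset.singleton_add]
    rw [hc]
    simp only [Fin.cons_zero, Fin.cons_succ]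
    generalize (X (⟨(List.ofFn (Fin.cons a q : Fin (K + 2) → ℕ) : Multiset ℕ), by simp⟩ : Idx) : A) = x
    generalize (List.map Ds (List.ofFn q)).prod ((Ds (a + m)) f) = y
    rw [smul_smul, smul_eq_C_mul, mul_assoc, div_eq_mul_inv, Int.cast_natCast]
  · intro p hp
    simp only [Finset.mem_coe, Fintype.mem_piFinset, Finset.mem_range]
    by_contra hcon
    push Not at hcon
    obtain ⟨i, hi⟩ := hcon
    apply hp
    have : ((List.ofFn (fun j : Fin (K + 1) => p j.succ)).map Ds).prod (Ds (p 0 + m) f) = 0 := by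
      revert hi
      refine Fin.cases ?_ ?_ i
      · intro hi
        rw [hf.1 _ (by omega), map_zero]
      · intro j hi
        apply list_zero_of_mem _ (p j.succ)
        · rw [List.mem_ofFn]; exact ⟨j, rfl⟩
        · have := congrArg (fun T => T f) (Ds_comm (p j.succ) (p 0 + m))
          simp only [Module.End.mul_apply] at this
          rw [this, hf.1 _ hi, map_zero]
    simp only [this, mul_zero]

theorem S_high (N K : ℕ) (hK : N ≤ K) (M : Multiset ℕ) (a : ℕ) (f : A) (hf : Good N f) :
    S N K M (Ds a f) = 0 := by
  have : S N K M (Ds a f) = Ds a (S N K M f) := by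
    exact (congrArg (fun T => T f) (S_D N a K M).eq).symm
  rw [this, S_apply, Finset.sum_eq_zero, map_zero]
  intro q _
  rw [hf.2 _ (by simpa using hK), mul_zero]

theorem L_eq (h : ℂ) (N m : ℕ) (f : A) (hf : Good N f) :
    L h (m : ℤ) f = (h ^ 2 • Uop Ds m + Vop Ds (tau N) N m) f := by
  have e1 : C (h ^ 2) * ∑ p ∈ Finset.range ((m : ℤ).toNat + 1),
      C ((p : ℂ) * (((m : ℤ) : ℂ) - (p : ℂ))) * dS p (dS ((m : ℤ) - p) f) = (h ^ 2 • Uop Ds m) f := by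
    rw [LinearMap.smul_apply, smul_eq_C_mul, Uop, LinearMap.sum_apply, Int.toNat_natCast]
    congr 1
    refine Finset.sum_congr rfl fun p hp => ?_
    have hp' : p ≤ m := by simpa [Nat.lt_succ_iff] using hp
    rw [← Nat.cast_sub hp', dS_nat, dS_nat, LinearMap.smul_apply, smul_eq_C_mul]
    simp
  have e2 : ∑ᶠ p : ℕ, C ((p : ℂ) + ((m : ℤ) : ℂ)) * t p * dS ((p : ℤ) + m) f
      = ∑ p ∈ Finset.range N, ((p : ℂ) + m) • (mu (t p) (Ds (p + m) f)) := by
    rw [finsum_eq_sum_of_support_subset (s := Finset.range N)]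
    · refine Finset.sum_congr rfl fun p _ => ?_
      rw [← Nat.cast_add, dS_nat, smul_eq_C_mul, mu_apply, mul_assoc]
      simp
    · intro p hp
      by_contra hcon
      apply hp
      have hcon' : N ≤ p := by simpa using hcon
      simp only [← Nat.cast_add, dS_nat]
      rw [hf.1 _ (by omega), mul_zero]
  have e3 : ∑ᶠ K : ℕ, ∑ p ∈ Finset.range N,
      ((p : ℂ) + m) • (((Nat.factorial K : ℂ)⁻¹) • S N (K + 1) {p}) (Ds (p + m) f)
      = ∑ K ∈ Finset.range N, ∑ p ∈ Finset.range N,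
      ((p : ℂ) + m) • (((Nat.factorial K : ℂ)⁻¹) • S N (K + 1) {p}) (Ds (p + m) f) := by
    apply finsum_eq_sum_of_support_subset
    intro K hp
    by_contra hcon
    apply hp
    have hcon' : N ≤ K := by simpa using hcon
    apply Finset.sum_eq_zero
    intro p _
    rw [LinearMap.smul_apply, S_high N (K + 1) (by omega) _ _ _ hf, smul_zero, smul_zero]
  rw [L, L0, e1, e2, finsum_congr (fun K => inner_eq N K m f hf), e3, Finset.sum_comm,
    LinearMap.add_apply, add_assoc, ← Finset.sum_add_distrib, Vop, LinearMap.sum_apply]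
  congr 1
  refine Finset.sum_congr rfl fun p _ => ?_
  rw [LinearMap.smul_apply, Module.End.mul_apply, tau, LinearMap.add_apply, LinearMap.sum_apply,
    smul_add, Finset.smul_sum]

/-- **Virasoro commutation relations for the multi-trace matrix model
operators** (Lemma in Section 7.3 of Borot–Shadrin, "Blobbed topological
recursion").  For all integers `m, n ≥ 1`,
`L_m ∘ L_n - L_n ∘ L_m = (m - n) L_{m+n}` as linear endomorphisms of `A`; in
particular `(L_m)_{m ≥ 1}` form a representation of the Virasoro commutation
relations. -/
theorem virasoro_commutation_multitrace (ℏ : ℂ) :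
    ∀ m n : ℤ, 1 ≤ m → 1 ≤ n →
      ∀ f : A, L ℏ m (L ℏ n f) - L ℏ n (L ℏ m f) =
        C ((m : ℂ) - (n : ℂ)) * L ℏ (m + n) f := by
  intro m' n' hm' hn' f
  obtain ⟨m, rfl⟩ := Int.eq_ofNat_of_zero_le (show 0 ≤ m' by omega)
  obtain ⟨n, rfl⟩ := Int.eq_ofNat_of_zero_le (show 0 ≤ n' by omega)
  obtain ⟨N1, h1⟩ := exists_good f
  obtain ⟨N2, h2⟩ := exists_good (L ℏ m f)
  obtain ⟨N3, h3⟩ := exists_good (L ℏ n f)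
  let N := N1 + N2 + N3 + m + n + 1
  have g1 : Good N f := h1.mono (by omega)
  have g2 : Good N (L ℏ m f) := h2.mono (by omega)
  have g3 : Good N (L ℏ n f) := h3.mono (by omega)
  have key := main_abs Ds (tau N) N m n f (ℏ ^ 2) (by omega) (by omega) Ds_comm
    (fun a b ha hb => tau_tau N a b ha hb) (fun a b _ => D_tau N a b) g1.1
  rw [L_eq ℏ N m _ g3, L_eq ℏ N n _ g2, L_eq ℏ N m f g1, L_eq ℏ N n f g1, key, ← Nat.cast_add,
    L_eq ℏ N (m + n) f g1, smul_eq_C_mul]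
  simp

end VirasoroMultiTrace
end

section
/- Finiteness of reduced graph data (combinatorial core of Lemma 3.12 of the paper, stating that the set of reduced bipartite graphs G^□_{g,n} is finite). For all integers g ≥ 0 and n ≥ 1, the following set of pairs (V, E) is finite, where E ∈ ℕ and V : ℕ×ℕ → ℕ is a finitely supported function (V(h,k) records the number of vertices of genus h and valency k, E the number of internal edges): (i) V(h,k) = 0 whenever k = 0, and whenever 2h−2+k ≤ 0 with (h,k) ≠ (0,2); (ii) V(0,2) ≤ n; (iii) the handshake relation Σ_{h,k} k·V(h,k) = 2E + n holds; (iv) 1 + E − Σ_{h,k} V(h,k) ≥ 0; (v) the genus constraint Σ_{h,k} h·V(h,k) + (1 + E − Σ_{h,k} V(h,k)) = g holds. -/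
/-!
Finiteness of reduced graph data (combinatorial core of Lemma 3.12 of
Borot–Shadrin, "Blobbed topological recursion"): the set of reduced bipartite
graphs `G^□_{g,n}` is finite.  A graph is recorded by the pair `(V, E)` where
`V (h, k)` is the number of vertices of genus `h` and valency `k` and `E` is
the number of internal edges.
-/

/-- **Finiteness of reduced graph data.**  For all `g ≥ 0` and `n ≥ 1`, the
set of pairs `(V, E)` — with `V : ℕ × ℕ →₀ ℕ` finitely supported and `E ∈ ℕ` —
satisfying
(i) `V (h, k) = 0` whenever `k = 0`, and whenever `2h - 2 + k ≤ 0` with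
`(h, k) ≠ (0, 2)`;
(ii) `V (0, 2) ≤ n`;
(iii) the handshake relation `∑ k · V (h,k) = 2E + n`;
(iv) `1 + E - ∑ V (h,k) ≥ 0` (the first Betti number of a connected graph is
nonnegative);
(v) the genus constraint `∑ h · V (h,k) + (1 + E - ∑ V (h,k)) = g`
is finite. -/
theorem reduced_graph_data_finite (g n : ℕ) (hn : 1 ≤ n) :
    Set.Finite { VE : ((ℕ × ℕ) →₀ ℕ) × ℕ |
      (∀ h k : ℕ, (k = 0 ∨ (2 * h + k ≤ 2 ∧ (h, k) ≠ (0, 2))) →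
        VE.1 (h, k) = 0) ∧
      VE.1 (0, 2) ≤ n ∧
      (VE.1.sum fun hk v => hk.2 * v) = 2 * VE.2 + n ∧
      (VE.1.sum fun _ v => v) ≤ 1 + VE.2 ∧
      (VE.1.sum fun hk v => (hk.1 : ℤ) * v) +
        (1 + (VE.2 : ℤ) - VE.1.sum fun _ v => (v : ℤ)) = (g : ℤ) } := by
  set B : ℕ := 5 * g + 5 * n + 5 with hB
  let W : (ℕ × ℕ) →₀ ℕ := Finsupp.onFinset
    (Finset.range (2 * B + 1) ×ˢ Finset.range (2 * B + 1))
    (fun p => if p ∈ Finset.range (2 * B + 1) ×ˢ Finset.range (2 * B + 1) then B else 0)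
    (by intro a ha; by_contra h; simp [h] at ha)
  refine ((Set.finite_Iic W).prod (Set.finite_Iic B)).subset ?_
  rintro ⟨V, E⟩ ⟨h1, h2, h3, h4, h5⟩
  simp only [Finsupp.sum] at h1 h2 h3 h4 h5
  have h5' : (∑ a ∈ V.support, a.1 * V a) + 1 + E = g + ∑ a ∈ V.support, V a := by
    zify
    linarith
  have key : ∑ a ∈ V.support, 3 * V a ≤ ∑ a ∈ V.support,
      (2 * (a.1 * V a) + a.2 * V a + if a = (0, 2) then n else 0) := by
    apply Finset.sum_le_sum
    rintro ⟨h, k⟩ ha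
    split_ifs with hc
    · simp only [Prod.mk.injEq] at hc
      obtain ⟨rfl, rfl⟩ := hc
      simp only
      omega
    · have h0 : V (h, k) ≠ 0 := by simpa using ha
      have : 3 ≤ 2 * h + k := by
        by_contra hlt
        exact h0 (h1 h k (Or.inr ⟨by omega, hc⟩))
      simp only
      nlinarith [Nat.mul_le_mul_right (V (h, k)) this]
  have hle : (∑ a ∈ V.support, if a = (0, 2) then n else 0) ≤ n := by
    rw [Finset.sum_ite_eq']
    split_ifs <;> omega
  rw [← Finset.mul_sum, Finset.sum_add_distrib, Finset.sum_add_distrib, ← Finset.mul_sum] at key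
  have hS : ∀ a ∈ V.support, V a ≤ ∑ a ∈ V.support, V a := fun a ha =>
    Finset.single_le_sum (f := fun a => V a) (fun _ _ => Nat.zero_le _) ha
  have hH : ∀ a ∈ V.support, a.1 * V a ≤ ∑ a ∈ V.support, a.1 * V a := fun a ha =>
    Finset.single_le_sum (f := fun a : ℕ × ℕ => a.1 * V a) (fun _ _ => Nat.zero_le _) ha
  have hK : ∀ a ∈ V.support, a.2 * V a ≤ ∑ a ∈ V.support, a.2 * V a := fun a ha =>
    Finset.single_le_sum (f := fun a : ℕ × ℕ => a.2 * V a) (fun _ _ => Nat.zero_le _) ha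
  refine ⟨?_, ?_⟩
  · intro a
    by_cases ha : V a = 0
    · simp [ha]
    · have hm : a ∈ V.support := by simpa using ha
      have e1 := hS a hm
      have e2 := hH a hm
      have e3 := hK a hm
      have e4 : a.1 ≤ a.1 * V a := Nat.le_mul_of_pos_right _ (by omega)
      have e5 : a.2 ≤ a.2 * V a := Nat.le_mul_of_pos_right _ (by omega)
      have hbox : a ∈ Finset.range (2 * B + 1) ×ˢ Finset.range (2 * B + 1) := by
        simp only [Finset.mem_product, Finset.mem_range]
        omega
      simp only [W, Finsupp.onFinset_apply, if_pos hbox]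
      omega
  · simp only [Set.mem_Iic]
    omega
end
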